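/- Let L be a DGLA, A a local Artinian ℂ-algebra, and 0 → I → A → Ā → 0 a small extension (I·m_A = 0). Let x ∈ MC_L(Ā) and let x̃ ∈ L^1 ⊗ m_A be any set-theoretic lifting of x. Then the element h = dx̃ + ½[x̃,x̃] lies in L^2 ⊗ I, satisfies dh = 0, and its cohomology class in H^2(L,d) ⊗ I is independent of the choice of lifting x̃. -/

import Mathlib

open scoped TensorProduct

/-- The sign `(-1)^k` as an integer. -/
def gsign (k : ℤ) : ℤ := if Even k then 1 else -1

/-- A (ℤ-graded) differential graded Lie algebra over a commutative ring `R`,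
presented internally: a module `V` with a grading by submodules, a degree `1`
differential squaring to zero, and a bracket satisfying graded skew-symmetry,
the graded Jacobi identity and the graded Leibniz rule. -/
structure DGLA (R : Type) [CommRing R] where
  V : Type
  [instAddCommGroup : AddCommGroup V]
  [instModule : Module R V]
  grade : ℤ → Submodule R V
  internal : DirectSum.IsInternal grade
  d : V →ₗ[R] V
  d_mem : ∀ (i : ℤ) (x : V), x ∈ grade i → d x ∈ grade (i + 1)
  d_sq : ∀ x : V, d (d x) = 0
  bracket : V →ₗ[R] V →ₗ[R] V
  bracket_mem : ∀ (i j : ℤ) (x y : V), x ∈ grade i → y ∈ grade j →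
    bracket x y ∈ grade (i + j)
  skew : ∀ (i j : ℤ) (x y : V), x ∈ grade i → y ∈ grade j →
    bracket x y + gsign (i * j) • bracket y x = 0
  jacobi : ∀ (i j : ℤ) (x y z : V), x ∈ grade i → y ∈ grade j →
    bracket x (bracket y z) =
      bracket (bracket x y) z + gsign (i * j) • bracket y (bracket x z)
  leibniz : ∀ (i : ℤ) (x y : V), x ∈ grade i →
    d (bracket x y) = bracket (d x) y + gsign i • bracket x (d y)

attribute [instance] DGLA.instAddCommGroup DGLA.instModule

namespace DGLA

variable (L : DGLA ℂ) (A : Type) [CommRing A] [Algebra ℂ A]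

/-- The differential of the base change `L ⊗_ℂ A`. -/
noncomputable def dA : A ⊗[ℂ] L.V →ₗ[A] A ⊗[ℂ] L.V :=
  LinearMap.baseChange A L.d

/-- The bracket of the base change `L ⊗_ℂ A`. -/
noncomputable def brA : A ⊗[ℂ] L.V →ₗ[A] A ⊗[ℂ] L.V →ₗ[A] A ⊗[ℂ] L.V :=
  TensorProduct.curry
    ((LinearMap.baseChange A (TensorProduct.lift L.bracket)) ∘ₗ
      (TensorProduct.AlgebraTensorModule.distribBaseChange ℂ A L.V L.V).symm.toLinearMap)

/-- The base change of the grading: `L^i ⊗_ℂ A` inside `A ⊗_ℂ L`. -/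
noncomputable def gradeA (i : ℤ) : Submodule A (A ⊗[ℂ] L.V) :=
  (L.grade i).baseChange A

/-- The Maurer-Cartan equation `d x + ½ [x,x] = 0` in `L ⊗ A`. -/
noncomputable def IsMC (x : A ⊗[ℂ] L.V) : Prop :=
  L.dA A x + algebraMap ℂ A 2⁻¹ • L.brA A x x = 0

/-- The gauge action `e^a * x = x + Σ_{n≥0} ([a,-]^n/(n+1)!)([a,x] - da)`,
truncated at `N`; when the coefficients of `a` and `x` lie in an ideal `J`
with `J ^ N = ⊥`, all further terms of the series vanish, so this is the
full gauge action. -/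
noncomputable def gauge (N : ℕ) (a x : A ⊗[ℂ] L.V) : A ⊗[ℂ] L.V :=
  x + ∑ n ∈ Finset.range N,
    algebraMap ℂ A (((n + 1).factorial : ℂ))⁻¹ •
      (((L.brA A a) ^ n) (L.brA A a x - L.dA A a))

/-- Gauge equivalence (for coefficients in a nilpotent ideal `J`). -/
noncomputable def GaugeEq (J : Ideal A) (x y : A ⊗[ℂ] L.V) : Prop :=
  ∃ a ∈ J • L.gradeA A 0, ∃ N : ℕ, J ^ N = ⊥ ∧ L.gauge A N a x = y

/-- Cocycles of degree `i` of a DGLA over `ℂ`. -/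
def cocycles (i : ℤ) : Submodule ℂ L.V :=
  L.grade i ⊓ LinearMap.ker L.d

/-- Degree `i` cohomology `H^i(L, d)` of a DGLA over `ℂ`. -/
abbrev cohomology (i : ℤ) :=
  L.cocycles i ⧸
    Submodule.comap (L.cocycles i).subtype (Submodule.map L.d (L.grade (i - 1)))

end DGLA

/-!
Write `F x = d x + ½ [x, x]` for the curvature of `x`. In degree one, the Leibniz rule and the
Jacobi identity give the Bianchi identity `d (F x) = [F x, x]`, and bilinearity of the bracket gives
`F y - F x = d (y - x) + ½ ([y - x, y] + [x, y - x])`. In a small extension every bracket of an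
element with coefficients in `I` and one with coefficients in `m_A` vanishes, so `F x` is closed and
`F y - F x = d (y - x)` for two liftings. That `F x` and `y - x` lie in `L² ⊗ I` and `L¹ ⊗ I`, and
not only in `L ⊗ I`, follows by applying the `A`-linear projection onto the relevant degree.
-/

section IdealSMul

variable {R M N P : Type*} [CommSemiring R] [AddCommMonoid M] [Module R M]
  [AddCommMonoid N] [Module R N] [AddCommMonoid P] [Module R P]

theorem bilin_apply_mem_mul_smul_top (B : M →ₗ[R] N →ₗ[R] P) {I J : Ideal R} {x : M} {y : N}
    (hx : x ∈ I • (⊤ : Submodule R M)) (hy : y ∈ J • (⊤ : Submodule R N)) :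
    B x y ∈ (I * J) • (⊤ : Submodule R P) := by
  induction hx using Submodule.smul_induction_on' with
  | add x _ x' _ hx hx' => simpa using add_mem hx hx'
  | smul a ha x _ =>
    induction hy using Submodule.smul_induction_on' with
    | add y _ y' _ hy hy' => simpa using add_mem hy hy'
    | smul b hb y _ =>
      rw [map_smul, map_smul, LinearMap.smul_apply, smul_smul, mul_comm b a]
      exact Submodule.smul_mem_smul (Ideal.mul_mem_mul ha hb) Submodule.mem_top

theorem bilin_apply_eq_zero_of_mul_eq_bot (B : M →ₗ[R] N →ₗ[R] P) {I J : Ideal R}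
    (hIJ : I * J = ⊥) {x : M} {y : N}
    (hx : x ∈ I • (⊤ : Submodule R M)) (hy : y ∈ J • (⊤ : Submodule R N)) :
    B x y = 0 := by
  simpa [hIJ] using bilin_apply_mem_mul_smul_top B hx hy

theorem mem_smul_of_mem_smul_top_of_isProj {Q : Submodule R M} {π : M →ₗ[R] M}
    (hπ : LinearMap.IsProj Q π) {I : Ideal R} {x : M} (hx : x ∈ I • (⊤ : Submodule R M))
    (hxQ : x ∈ Q) : x ∈ I • Q := by
  have hπx : π x ∈ I • (⊤ : Submodule R M).map π := by
    rw [← Submodule.map_smul'']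
    exact Submodule.mem_map_of_mem hx
  have hrange : (⊤ : Submodule R M).map π ≤ Q := by
    rintro _ ⟨y, -, rfl⟩
    exact hπ.map_mem y
  rw [← hπ.map_id x hxQ]
  exact Submodule.smul_mono le_rfl hrange hπx

end IdealSMul

section BaseChange

variable {R M : Type*} (A : Type*) [CommSemiring R] [Semiring A] [Algebra R A]
  [AddCommMonoid M] [Module R M]

theorem isProj_baseChange {Q : Submodule R M} {π : M →ₗ[R] M} (hπ : LinearMap.IsProj Q π) :
    LinearMap.IsProj (Q.baseChange A) (π.baseChange A) where
  map_mem x := by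
    have hfactor : π = Q.subtype ∘ₗ hπ.codRestrict := by ext; simp
    rw [hfactor, LinearMap.baseChange_comp]
    exact LinearMap.mem_range_self _ _
  map_id := by
    have hfix : π ∘ₗ Q.subtype = Q.subtype := by ext v; exact hπ.map_id v v.2
    rintro _ ⟨y, rfl⟩
    rw [← LinearMap.comp_apply, ← LinearMap.baseChange_comp, hfix]

end BaseChange

theorem gsign_of_even {k : ℤ} (hk : Even k) : gsign k = 1 := if_pos hk

theorem gsign_of_odd {k : ℤ} (hk : Odd k) : gsign k = -1 := if_neg (Int.not_even_iff_odd.mpr hk)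

namespace DGLA

variable {L : DGLA ℂ} {A : Type} [CommRing A] [Algebra ℂ A] {i j : ℤ} {x y : A ⊗[ℂ] L.V}

@[simp]
theorem dA_tmul (a : A) (v : L.V) : L.dA A (a ⊗ₜ v) = a ⊗ₜ L.d v := rfl

@[simp]
theorem brA_tmul (a b : A) (v w : L.V) :
    L.brA A (a ⊗ₜ v) (b ⊗ₜ w) = (a * b) ⊗ₜ L.bracket v w := by
  simp [brA]

theorem tmul_mem_gradeA (a : A) {v : L.V} (hv : v ∈ L.grade i) : a ⊗ₜ v ∈ L.gradeA A i :=
  Submodule.tmul_mem_baseChange_of_mem a hv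

@[elab_as_elim]
theorem gradeA_induction {p : (x : A ⊗[ℂ] L.V) → x ∈ L.gradeA A i → Prop}
    (zero : p 0 (zero_mem _))
    (add : ∀ x y hx hy, p x hx → p y hy → p (x + y) (add_mem hx hy))
    (tmul : ∀ (a : A) v (hv : v ∈ L.grade i), p (a ⊗ₜ v) (tmul_mem_gradeA a hv))
    (x : A ⊗[ℂ] L.V) (hx : x ∈ L.gradeA A i) : p x hx := by
  obtain ⟨y, rfl⟩ := hx
  induction y with
  | zero => simpa using zero
  | add y z hy hz => simpa using add _ _ _ _ hy hz
  | tmul a v => exact tmul a v v.2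

theorem dA_dA (x : A ⊗[ℂ] L.V) : L.dA A (L.dA A x) = 0 := by
  induction x with
  | zero => simp
  | add x y hx hy => simp [hx, hy]
  | tmul a v => simp [L.d_sq]

theorem dA_mem_gradeA (hx : x ∈ L.gradeA A i) : L.dA A x ∈ L.gradeA A (i + 1) := by
  induction x, hx using gradeA_induction with
  | zero => simp
  | add x y _ _ hx hy => simpa using add_mem hx hy
  | tmul a v hv => exact tmul_mem_gradeA a (L.d_mem i v hv)

theorem brA_mem_gradeA (hx : x ∈ L.gradeA A i) (hy : y ∈ L.gradeA A j) :
    L.brA A x y ∈ L.gradeA A (i + j) := by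
  induction x, hx using gradeA_induction with
  | zero => simp
  | add x x' _ _ hx hx' => simpa using add_mem hx hx'
  | tmul a v hv =>
    induction y, hy using gradeA_induction with
    | zero => simp
    | add y y' _ _ hy hy' => simpa using add_mem hy hy'
    | tmul b w hw => simpa using tmul_mem_gradeA (a * b) (L.bracket_mem i j v w hv hw)

theorem brA_skew (hx : x ∈ L.gradeA A i) (hy : y ∈ L.gradeA A j) :
    L.brA A x y = -(gsign (i * j) • L.brA A y x) := by
  induction x, hx using gradeA_induction with
  | zero => simp
  | add x x' _ _ hx hx' => simp [hx, hx', add_comm]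
  | tmul a v hv =>
    induction y, hy using gradeA_induction with
    | zero => simp
    | add y y' _ _ hy hy' => simp [hy, hy', add_comm]
    | tmul b w hw =>
      rw [brA_tmul, brA_tmul, eq_neg_of_add_eq_zero_left (L.skew i j v w hv hw),
        TensorProduct.tmul_neg, TensorProduct.tmul_smul, mul_comm a b]

theorem brA_jacobi (hx : x ∈ L.gradeA A i) (hy : y ∈ L.gradeA A j) (z : A ⊗[ℂ] L.V) :
    L.brA A x (L.brA A y z) =
      L.brA A (L.brA A x y) z + gsign (i * j) • L.brA A y (L.brA A x z) := by
  induction x, hx using gradeA_induction with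
  | zero => simp
  | add x x' _ _ hx hx' => simp [hx, hx', add_add_add_comm]
  | tmul a v hv =>
    induction y, hy using gradeA_induction with
    | zero => simp
    | add y y' _ _ hy hy' => simp [hy, hy', add_add_add_comm]
    | tmul b w hw =>
      induction z with
      | zero => simp
      | add z z' hz hz' =>
        simp only [map_add, smul_add]
        rw [hz, hz', add_add_add_comm]
      | tmul c u =>
        simp only [brA_tmul]
        rw [L.jacobi i j v w u hv hw, TensorProduct.tmul_add, TensorProduct.tmul_smul,
          mul_assoc, mul_left_comm b a c]

theorem dA_brA (hx : x ∈ L.gradeA A i) (y : A ⊗[ℂ] L.V) :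
    L.dA A (L.brA A x y) = L.brA A (L.dA A x) y + gsign i • L.brA A x (L.dA A y) := by
  induction x, hx using gradeA_induction with
  | zero => simp
  | add x x' _ _ hx hx' => simp [hx, hx', add_add_add_comm]
  | tmul a v hv =>
    induction y with
    | zero => simp
    | add y y' hy hy' => simp [hy, hy', add_add_add_comm]
    | tmul b w =>
      simp only [brA_tmul, dA_tmul]
      rw [L.leibniz i v w hv, TensorProduct.tmul_add, TensorProduct.tmul_smul]

theorem mem_smul_gradeA {I : Ideal A} (hxI : x ∈ I • (⊤ : Submodule A (A ⊗[ℂ] L.V)))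
    (hx : x ∈ L.gradeA A i) : x ∈ I • L.gradeA A i := by
  obtain ⟨C, hC⟩ := (L.grade i).exists_isCompl
  have hproj : LinearMap.IsProj (L.grade i) ((L.grade i).projection C hC) :=
    ⟨Submodule.projection_apply_mem hC, fun _ ↦ Submodule.projection_apply_of_mem_left hC⟩
  exact mem_smul_of_mem_smul_top_of_isProj (isProj_baseChange A hproj) hxI hx

theorem dA_brA_self_of_odd (hi : Odd i) (hx : x ∈ L.gradeA A i) :
    L.dA A (L.brA A x x) = (2 : ℂ) • L.brA A (L.dA A x) x := by
  have hskew : L.brA A x (L.dA A x) = -L.brA A (L.dA A x) x := by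
    rw [brA_skew hx (dA_mem_gradeA hx), gsign_of_even (Int.even_mul_succ_self i), one_smul]
  rw [dA_brA hx, gsign_of_odd hi, hskew]
  module

theorem brA_brA_self_self_of_odd (hi : Odd i) (hx : x ∈ L.gradeA A i) :
    L.brA A (L.brA A x x) x = 0 := by
  have hskew : L.brA A x (L.brA A x x) = -L.brA A (L.brA A x x) x := by
    rw [brA_skew hx (brA_mem_gradeA hx hx), gsign_of_even ((Even.add_self i).mul_left i), one_smul]
  have hjacobi := brA_jacobi hx hx x
  rw [gsign_of_odd (hi.mul hi), hskew] at hjacobi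
  have hthree : (3 : ℂ) • L.brA A (L.brA A x x) x = 0 := by
    rw [← sub_eq_zero.mpr hjacobi.symm]
    module
  exact (smul_eq_zero_iff_right three_ne_zero).mp hthree

variable (L A) in
/-- The curvature `d x + ½ [x, x]` of `x`, i.e. the left-hand side of the Maurer-Cartan equation;
for a lifting `x` of a Maurer-Cartan solution it is the obstruction cocycle. The scalar `½` is taken
in `A`, as in `IsMC`. -/
noncomputable def curvature (x : A ⊗[ℂ] L.V) : A ⊗[ℂ] L.V :=
  L.dA A x + algebraMap ℂ A 2⁻¹ • L.brA A x x

theorem curvature_mem_gradeA (hx : x ∈ L.gradeA A 1) : L.curvature A x ∈ L.gradeA A 2 :=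
  add_mem (dA_mem_gradeA (i := 1) hx)
    (Submodule.smul_mem _ _ (brA_mem_gradeA (i := 1) (j := 1) hx hx))

theorem dA_curvature_of_odd (hi : Odd i) (hx : x ∈ L.gradeA A i) :
    L.dA A (L.curvature A x) = L.brA A (L.curvature A x) x := by
  calc L.dA A (L.curvature A x)
      = algebraMap ℂ A 2⁻¹ • L.dA A (L.brA A x x) := by simp [curvature, dA_dA]
    _ = L.brA A (L.dA A x) x := by
      rw [dA_brA_self_of_odd hi hx, algebraMap_smul, inv_smul_smul₀ two_ne_zero]
    _ = L.brA A (L.curvature A x) x := by simp [curvature, brA_brA_self_self_of_odd hi hx]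

theorem curvature_sub_curvature (x y : A ⊗[ℂ] L.V) :
    L.curvature A y - L.curvature A x =
      L.dA A (y - x) + algebraMap ℂ A 2⁻¹ • (L.brA A (y - x) y + L.brA A x (y - x)) := by
  simp only [curvature, map_sub, LinearMap.sub_apply]
  module

theorem dA_curvature_eq_zero_of_mul_eq_bot {I J : Ideal A} (hIJ : I * J = ⊥) (hi : Odd i)
    (hx : x ∈ L.gradeA A i) (hxJ : x ∈ J • (⊤ : Submodule A (A ⊗[ℂ] L.V)))
    (hF : L.curvature A x ∈ I • (⊤ : Submodule A (A ⊗[ℂ] L.V))) :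
    L.dA A (L.curvature A x) = 0 := by
  rw [dA_curvature_of_odd hi hx]
  exact bilin_apply_eq_zero_of_mul_eq_bot _ hIJ hF hxJ

theorem curvature_sub_curvature_eq_dA_of_mul_eq_bot {I J : Ideal A} (hIJ : I * J = ⊥)
    (hx : x ∈ J • (⊤ : Submodule A (A ⊗[ℂ] L.V))) (hy : y ∈ J • (⊤ : Submodule A (A ⊗[ℂ] L.V)))
    (hyx : y - x ∈ I • (⊤ : Submodule A (A ⊗[ℂ] L.V))) :
    L.curvature A y - L.curvature A x = L.dA A (y - x) := by
  have hleft : L.brA A (y - x) y = 0 := bilin_apply_eq_zero_of_mul_eq_bot _ hIJ hyx hy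
  have hright : L.brA A x (y - x) = 0 :=
    bilin_apply_eq_zero_of_mul_eq_bot _ (mul_comm I J ▸ hIJ) hx hyx
  rw [curvature_sub_curvature, hleft, hright, add_zero, smul_zero, add_zero]

end DGLA

theorem stmt_4_general (L : DGLA ℂ) (A : Type) [CommRing A] [Algebra ℂ A] (I J : Ideal A)
    (hIJ : I * J = ⊥) (x : A ⊗[ℂ] L.V) (hx : x ∈ J • L.gradeA A 1)
    (hF : L.curvature A x ∈ I • (⊤ : Submodule A (A ⊗[ℂ] L.V))) :
    L.curvature A x ∈ I • L.gradeA A 2 ∧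
    L.dA A (L.curvature A x) = 0 ∧
    ∀ y ∈ J • L.gradeA A 1, x - y ∈ I • (⊤ : Submodule A (A ⊗[ℂ] L.V)) →
      ∃ p ∈ I • L.gradeA A 1, L.curvature A y - L.curvature A x = L.dA A p := by
  have hgrade : J • L.gradeA A 1 ≤ L.gradeA A 1 := Submodule.smul_le_right
  have htop : J • L.gradeA A 1 ≤ J • ⊤ := Submodule.smul_mono le_rfl le_top
  refine ⟨DGLA.mem_smul_gradeA hF (DGLA.curvature_mem_gradeA (hgrade hx)),
    DGLA.dA_curvature_eq_zero_of_mul_eq_bot hIJ odd_one (hgrade hx) (htop hx) hF, fun y hy hxy ↦ ?_⟩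
  have hyx : y - x ∈ I • (⊤ : Submodule A (A ⊗[ℂ] L.V)) := sub_mem_comm_iff.mp hxy
  exact ⟨y - x, DGLA.mem_smul_gradeA hyx (sub_mem (hgrade hy) (hgrade hx)),
    DGLA.curvature_sub_curvature_eq_dA_of_mul_eq_bot hIJ (htop hx) (htop hy) hyx⟩

/-- Let `0 → I → A → Ā → 0` be a small extension
(`I · m_A = 0`), `x ∈ MC_L(Ā)`, and `x̃ ∈ L^1 ⊗ m_A` any set-theoretic lifting
of `x` (i.e. the Maurer-Cartan expression of `x̃` has coefficients in `I`).
Then `h = dx̃ + ½[x̃,x̃]` lies in `L^2 ⊗ I`, satisfies `dh = 0`, and its class in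
`H^2(L,d) ⊗ I` is independent of the choice of lifting: for any other lifting
the two cocycles differ by the coboundary of an element of `L^1 ⊗ I`. -/
theorem stmt_4 (L : DGLA ℂ) (A : Type) [CommRing A] [Algebra ℂ A]
    [IsLocalRing A] [IsArtinianRing A]
    (I : Ideal A) (hI : I ≤ IsLocalRing.maximalIdeal A)
    (hsmall : I * IsLocalRing.maximalIdeal A = ⊥)
    (xt : A ⊗[ℂ] L.V) (hxt : xt ∈ (IsLocalRing.maximalIdeal A) • L.gradeA A 1)
    (hbar : L.dA A xt + algebraMap ℂ A 2⁻¹ • L.brA A xt xt ∈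
      I • (⊤ : Submodule A (A ⊗[ℂ] L.V))) :
    L.dA A xt + algebraMap ℂ A 2⁻¹ • L.brA A xt xt ∈ I • L.gradeA A 2 ∧
    L.dA A (L.dA A xt + algebraMap ℂ A 2⁻¹ • L.brA A xt xt) = 0 ∧
    (∀ xt' : A ⊗[ℂ] L.V, xt' ∈ (IsLocalRing.maximalIdeal A) • L.gradeA A 1 →
      xt - xt' ∈ I • (⊤ : Submodule A (A ⊗[ℂ] L.V)) →
      ∃ p ∈ I • L.gradeA A 1,
        (L.dA A xt' + algebraMap ℂ A 2⁻¹ • L.brA A xt' xt')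
          - (L.dA A xt + algebraMap ℂ A 2⁻¹ • L.brA A xt xt) = L.dA A p) := by
  exact stmt_4_general L A I (IsLocalRing.maximalIdeal A) hsmall xt hxt hbar
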